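/- Every weakly triangulated graph is either a clique, or the complement of a perfect matching, or admits a star cutset. -/

import Mathlib

/-!
A *two-pair* is a pair of distinct non-adjacent vertices all of whose connecting induced paths have
length two. The proof rests on the theorem of Hayward, Hoàng and Maffray that a weakly triangulated
graph that is not a clique has a two-pair (`exists_isTwoPair`).

The core is a lemma in the style of Roussel and Rubio (`complete_of_isIndPath`): if `T` is
anticonnected (connected in the complement) and the ends of an induced path `p 0, …, p n` with
`3 ≤ n` are complete to `T`, then `p 1` or `p 2` is complete to `T`. Otherwise take a shortest
antipath from `p 1` to `p 2` with interior in `T`. If its interior is a single vertex `t`, then `t`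
has two consecutive neighbours on the path at distance at least three, which gives a long hole.
If not, then adding `p n` (for `4 ≤ n`) or both ends of the path (for `n = 3`) to the antipath gives
a long antihole.

To find a two-pair, take `T` maximal among the anticonnected sets whose set of complete vertices
`C(T)` is not a clique, and, inductively, a two-pair of the graph induced on `C(T)`. By the lemma, an
induced path of length at least three between its two vertices that leaves `C(T)` contains a
vertex `v ∉ C(T)` with both neighbours on the path in `C(T)`; then `T ∪ {v}` contradicts
maximality.

Finally let `{x, y}` be a two-pair. The set `N(x) ∩ N(y)` separates `x` from `y`, so, adding `x` or
`y` to it, there is a star cutset unless `x` and `y` are joined to all other vertices. In the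
latter case induction on the graph without `x` and `y` concludes. Both inductions are over subsets
`W` of a fixed graph.
-/


open SimpleGraph

/-- A graph is weakly triangulated if it contains no induced cycle of length ≥ 5
(long hole) and no complement of such a cycle (long antihole) as an induced subgraph. -/
def SimpleGraph.IsWeaklyTriangulated {V : Type*} (G : SimpleGraph V) : Prop :=
  ∀ n : ℕ, 5 ≤ n → IsEmpty (cycleGraph n ↪g G) ∧ IsEmpty ((cycleGraph n)ᶜ ↪g G)

/-! ### Induced paths, holes and antiholes -/

/-- `p 0, …, p n` are distinct and induce a path, in this order, in `G`. Values of `p` beyond `n` are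
irrelevant. -/
def IsIndPath {V : Type*} (G : SimpleGraph V) (p : ℕ → V) (n : ℕ) : Prop :=
  ∀ i j, i < j → j ≤ n → p i ≠ p j ∧ (G.Adj (p i) (p j) ↔ j = i + 1)

lemma cycleGraph_adj_of_lt {n : ℕ} {i j : Fin n} (h : i < j) :
    (cycleGraph n).Adj i j ↔ j.val = i.val + 1 ∨ (i.val = 0 ∧ j.val + 1 = n) := by
  rw [cycleGraph_adj', Fin.coe_sub_iff_lt.mpr h, Fin.coe_sub_iff_le.mpr h.le]
  have := j.isLt
  have : i.val < j.val := h
  omega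

/-- A vertex adjacent to exactly the two ends of an induced path closes it to an induced cycle. -/
lemma cycle_of_isIndPath {V : Type*} {G : SimpleGraph V} {p : ℕ → V} {n : ℕ}
    (hp : IsIndPath G p n) (t : V)
    (ht : ∀ i ≤ n, t ≠ p i ∧ (G.Adj t (p i) ↔ i = 0 ∨ i = n)) :
    Nonempty (cycleGraph (n + 2) ↪g G) := by
  set f : Fin (n + 2) → V := fun i => if i.val ≤ n then p i else t with hf
  have key : ∀ i j : Fin (n + 2), i < j →
      f i ≠ f j ∧ (G.Adj (f i) (f j) ↔ (cycleGraph (n + 2)).Adj i j) := by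
    intro i j hij
    rw [cycleGraph_adj_of_lt hij]
    have hj := j.isLt
    have hij' : i.val < j.val := hij
    have hi : i.val ≤ n := by omega
    by_cases hjn : j.val ≤ n
    · simp only [hf, hi, hjn, if_true]
      refine ⟨(hp _ _ hij' hjn).1, ?_⟩
      rw [(hp _ _ hij' hjn).2]
      omega
    · simp only [hf, hi, hjn, if_true, if_false]
      refine ⟨(ht _ hi).1.symm, ?_⟩
      rw [G.adj_comm, (ht _ hi).2]
      omega
  refine ⟨⟨⟨f, ?_⟩, ?_⟩⟩
  · intro i j hij
    rcases lt_trichotomy i j with h | h | h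
    · exact absurd hij (key i j h).1
    · exact h
    · exact absurd hij.symm (key j i h).1
  · intro i j
    change G.Adj (f i) (f j) ↔ _
    rcases lt_trichotomy i j with h | h | h
    · exact (key i j h).2
    · subst h; simp
    · exact (G.adj_comm _ _).trans ((key j i h).2.trans (SimpleGraph.adj_comm _ _ _))

lemma no_hole {V : Type*} {G : SimpleGraph V} (hwt : G.IsWeaklyTriangulated)
    {p : ℕ → V} {n : ℕ} (hn : 3 ≤ n) (hp : IsIndPath G p n) (t : V)
    (ht : ∀ i ≤ n, t ≠ p i ∧ (G.Adj t (p i) ↔ i = 0 ∨ i = n)) : False := by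
  obtain ⟨e⟩ := cycle_of_isIndPath hp t ht
  exact (hwt (n + 2) (by omega)).1.false e

lemma no_antihole {V : Type*} {G : SimpleGraph V} (hwt : G.IsWeaklyTriangulated)
    {p : ℕ → V} {n : ℕ} (hn : 3 ≤ n) (hp : IsIndPath Gᶜ p n) (t : V)
    (ht : ∀ i ≤ n, t ≠ p i ∧ (Gᶜ.Adj t (p i) ↔ i = 0 ∨ i = n)) : False := by
  obtain ⟨e⟩ := cycle_of_isIndPath hp t ht
  have e' := Embedding.complEquiv e
  rw [compl_compl] at e'
  exact (hwt (n + 2) (by omega)).2.false e'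

lemma IsIndPath.shift {V : Type*} {G : SimpleGraph V} {p : ℕ → V} {n : ℕ}
    (hp : IsIndPath G p n) (k m : ℕ) (h : k + m ≤ n) : IsIndPath G (fun i => p (k + i)) m := by
  intro i j hij hj
  obtain ⟨h1, h2⟩ := hp (k + i) (k + j) (by omega) (by omega)
  exact ⟨h1, h2.trans (by omega)⟩

lemma IsIndPath.cons {V : Type*} {G : SimpleGraph V} {p : ℕ → V} {n : ℕ}
    (hp : IsIndPath G p n) (v : V) (hv : ∀ i ≤ n, v ≠ p i ∧ (G.Adj v (p i) ↔ i = 0)) :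
    IsIndPath G (fun i => if i = 0 then v else p (i - 1)) (n + 1) := by
  intro i j hij hj
  have hj0 : j ≠ 0 := by omega
  by_cases hi : i = 0
  · simp only [hi, hj0, if_true, if_false]
    refine ⟨(hv (j - 1) (by omega)).1, ?_⟩
    rw [(hv (j - 1) (by omega)).2]
    omega
  · simp only [hi, hj0, if_false]
    obtain ⟨h1, h2⟩ := hp (i - 1) (j - 1) (by omega) (by omega)
    exact ⟨h1, h2.trans (by omega)⟩

/-! ### Connectivity inside a vertex set -/

/-- The graph on all of `V` keeping only the edges of `G` with both ends in `S`. It stands in for the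
induced subgraph on `S`, without passing to a subtype. -/
def within {V : Type*} (G : SimpleGraph V) (S : Set V) : SimpleGraph V where
  Adj u v := G.Adj u v ∧ u ∈ S ∧ v ∈ S
  symm := ⟨fun _ _ h => ⟨h.1.symm, h.2.2, h.2.1⟩⟩
  loopless := ⟨fun _ h => h.1.ne rfl⟩

lemma within_mono {V : Type*} {G : SimpleGraph V} {S T : Set V} (h : S ⊆ T) :
    within G S ≤ within G T :=
  fun _ _ hab => ⟨hab.1, h hab.2.1, h hab.2.2⟩

/-- A shortest walk is an induced path. -/
lemma exists_isIndPath {V : Type*} {G : SimpleGraph V} {S : Set V} {x y : V} (hxy : x ≠ y)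
    (h : (within G S).Reachable x y) :
    ∃ p n, IsIndPath G p n ∧ 1 ≤ n ∧ p 0 = x ∧ p n = y ∧ ∀ i ≤ n, p i ∈ S := by
  obtain ⟨w, hw⟩ := h.exists_walk_length_eq_dist
  have hpos := h.pos_dist_of_ne hxy
  have hS : ∀ i ≤ w.length, w.getVert i ∈ S := by
    intro i hi
    rcases Nat.eq_zero_or_pos i with h0 | h0
    · subst h0
      exact (w.adj_getVert_succ (i := 0) (by omega)).2.1
    · obtain ⟨k, rfl⟩ : ∃ k, i = k + 1 := ⟨i - 1, by omega⟩
      exact (w.adj_getVert_succ (i := k) (by omega)).2.2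
  refine ⟨w.getVert, w.length, ?_, by omega, by simp, by simp, hS⟩
  intro i j hij hj
  have h1 : (w.take i).length = i := by rw [Walk.take_length]; omega
  have h2 : (w.drop j).length = w.length - j := Walk.drop_length ..
  refine ⟨fun heq => ?_, fun hadj => ?_, ?_⟩
  · have := dist_le ((w.take i).append ((w.drop j).copy heq.symm rfl))
    rw [Walk.length_append, Walk.length_copy] at this
    omega
  · have hadj' : (within G S).Adj (w.getVert i) (w.getVert j) :=
      ⟨hadj, hS i (by omega), hS j hj⟩
    have := dist_le ((w.take i).append (Walk.cons hadj' (w.drop j)))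
    rw [Walk.length_append, Walk.length_cons] at this
    omega
  · rintro rfl
    exact (w.adj_getVert_succ (by omega)).1

/-- `T` is connected in the complement of `G`. The empty set counts as anticonnected. -/
def Anticonn {V : Type*} (G : SimpleGraph V) (T : Set V) : Prop :=
  ∀ u ∈ T, ∀ v ∈ T, (within Gᶜ T).Reachable u v

/-- `v` is adjacent to every vertex of `T`; in particular `v ∉ T`. -/
def CompleteTo {V : Type*} (G : SimpleGraph V) (T : Set V) (v : V) : Prop :=
  ∀ t ∈ T, G.Adj v t

lemma Anticonn.singleton {V : Type*} (G : SimpleGraph V) (t : V) : Anticonn G {t} := by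
  rintro u rfl v rfl
  exact Reachable.refl _

lemma Anticonn.insert_vertex {V : Type*} {G : SimpleGraph V} {T : Set V} (hT : Anticonn G T) {v t : V}
    (ht : t ∈ T) (hvt : Gᶜ.Adj v t) : Anticonn G (insert v T) := by
  have hto : ∀ u ∈ insert v T, (within Gᶜ (insert v T)).Reachable u t := by
    rintro u (rfl | hu)
    · exact Adj.reachable ⟨hvt, Set.mem_insert _ _, Set.mem_insert_of_mem _ ht⟩
    · exact (hT u hu t ht).mono (within_mono (Set.subset_insert _ _))
  intro a ha b hb
  exact (hto a ha).trans (hto b hb).symm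

/-! ### Paths with ends complete to an anticonnected set -/

/-- Two adjacent vertices, neither complete to the anticonnected set `T`, are joined by an induced
antipath with interior in `T`. -/
lemma exists_antipath {V : Type*} {G : SimpleGraph V} {T : Set V} (hT : Anticonn G T) {x y : V}
    (hxT : x ∉ T) (hyT : y ∉ T) (hxy : G.Adj x y)
    (hx : ¬ CompleteTo G T x) (hy : ¬ CompleteTo G T y) :
    ∃ q m, IsIndPath Gᶜ q m ∧ 2 ≤ m ∧ q 0 = x ∧ q m = y ∧ ∀ i, 0 < i → i < m → q i ∈ T := by
  simp only [CompleteTo, not_forall] at hx hy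
  obtain ⟨s, hs, hxs⟩ := hx
  obtain ⟨t, ht, hyt⟩ := hy
  have hxs' : Gᶜ.Adj x s := ⟨fun h => hxT (h ▸ hs), hxs⟩
  have hyt' : Gᶜ.Adj y t := ⟨fun h => hyT (h ▸ ht), hyt⟩
  have hc := (hT.insert_vertex hs hxs').insert_vertex (Set.mem_insert_of_mem _ ht) hyt'
  obtain ⟨q, m, hq, hm, h0, h1, hS⟩ := exists_isIndPath hxy.ne
    (hc x (by simp) y (by simp))
  refine ⟨q, m, hq, ?_, h0, h1, fun i hi him => ?_⟩
  · by_contra hlt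
    obtain rfl : m = 1 := by omega
    have := ((hq 0 1 (by omega) le_rfl).2.mpr rfl).2
    rw [h0, h1] at this
    exact this hxy
  · rcases hS i him.le with h | h | h
    · exact absurd (h.trans h1.symm) (hq i m him le_rfl).1
    · exact absurd (h0.trans h.symm) (hq 0 i hi him.le).1
    · exact h

/-- An induced path of length at least three with ends complete to an anticonnected set `T` has its
second or third vertex complete to `T`: otherwise a shortest antipath through `T` between these two
vertices leads to a long hole or a long antihole. -/
lemma complete_of_isIndPath {V : Type*} {G : SimpleGraph V} (hwt : G.IsWeaklyTriangulated)
    {T : Set V} (hT : Anticonn G T) {p : ℕ → V} {n : ℕ} (hn : 3 ≤ n) (hp : IsIndPath G p n)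
    (h0 : CompleteTo G T (p 0)) (hend : CompleteTo G T (p n)) :
    CompleteTo G T (p 1) ∨ CompleteTo G T (p 2) := by
  classical
  by_contra! hcon
  obtain ⟨hc1, hc2⟩ := hcon
  have hadj : G.Adj (p 1) (p 2) := (hp 1 2 (by omega) (by omega)).2.mpr rfl
  have hnadj : ∀ i j, i < j → j ≤ n → j ≠ i + 1 → ¬ G.Adj (p i) (p j) :=
    fun i j hij hj hne h => hne ((hp i j hij hj).2.mp h)
  have h1T : p 1 ∉ T := fun h => hnadj 1 n (by omega) le_rfl (by omega) (hend _ h).symm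
  have h2T : p 2 ∉ T := fun h => hnadj 0 2 (by omega) (by omega) (by omega) (h0 _ h)
  obtain ⟨q, m, hq, hm, hq0, hqm, hqT⟩ := exists_antipath hT h1T h2T hadj hc1 hc2
  -- a vertex complete to `T` is antiadjacent to no interior vertex of the antipath
  have hcompl : ∀ v, CompleteTo G T v → ∀ i, 0 < i → i < m → v ≠ q i ∧ ¬ Gᶜ.Adj v (q i) :=
    fun v hv i hi him => ⟨(hv _ (hqT i hi him)).ne, fun h => h.2 (hv _ (hqT i hi him))⟩
  rcases hm.eq_or_lt with rfl | hm3
  · -- `q 1` is a common non-neighbour of `p 1` and `p 2`; `p k` is its next neighbour on the path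
    have ht := hqT 1 (by omega) (by omega)
    have hn1 : ¬ G.Adj (q 1) (p 1) := fun h =>
      ((hq 0 1 (by omega) (by omega)).2.mpr rfl).2 (hq0 ▸ h.symm)
    have hn2 : ¬ G.Adj (q 1) (p 2) := fun h =>
      ((hq 1 2 (by omega) (by omega)).2.mpr rfl).2 (hqm ▸ h)
    have hex : ∃ k, 0 < k ∧ G.Adj (q 1) (p k) := ⟨n, by omega, (hend _ ht).symm⟩
    set k := Nat.find hex with hk
    obtain ⟨hk0, hkadj⟩ := Nat.find_spec hex
    have hkn : k ≤ n := Nat.find_min' hex ⟨by omega, (hend _ ht).symm⟩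
    rw [← hk] at hk0 hkadj
    have hk1 : k ≠ 1 := fun h => hn1 (by rwa [h] at hkadj)
    have hk2 : k ≠ 2 := fun h => hn2 (by rwa [h] at hkadj)
    have hk3 : 3 ≤ k := by omega
    refine no_hole hwt hk3 (by simpa using hp.shift 0 k (by omega)) (q 1) fun i hi => ⟨?_, ?_, ?_⟩
    · intro heq
      by_cases h : i = 0
      · exact (h0 _ ht).ne (by rw [heq, h])
      · by_cases hin : i = n
        · exact (hend _ ht).ne (by rw [heq, hin])
        · have e0 := (hp 0 i (by omega) (by omega)).2.mp (heq ▸ h0 _ ht)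
          have e1 := (hp i n (by omega) (by omega)).2.mp (heq ▸ (hend _ ht).symm)
          omega
    · intro h
      by_contra! hne
      exact Nat.find_min hex (m := i) (by omega) ⟨by omega, h⟩
    · rintro (h | h)
      · exact h ▸ (h0 _ ht).symm
      · rw [h]; exact hkadj
  · rcases hn.eq_or_lt with rfl | hn4
    · -- the antihole is `p 3, p 1 = q 0, …, q m = p 2, p 0`
      have hcons : IsIndPath Gᶜ _ (m + 1) := hq.cons (p 3) fun i hi => by
        rcases Nat.eq_zero_or_pos i with rfl | hi0
        · rw [hq0]
          exact ⟨(hp 1 3 (by omega) le_rfl).1.symm, by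
            simpa using ⟨(hp 1 3 (by omega) le_rfl).1.symm,
              fun h => hnadj 1 3 (by omega) le_rfl (by omega) h.symm⟩⟩
        · rcases hi.eq_or_lt with rfl | him
          · rw [hqm]
            refine ⟨(hp 2 3 (by omega) le_rfl).1.symm, ?_⟩
            refine iff_of_false (fun h => h.2 ?_) (by omega)
            exact ((hp 2 3 (by omega) le_rfl).2.mpr rfl).symm
          · exact ⟨(hcompl _ hend i hi0 him).1,
              iff_of_false (hcompl _ hend i hi0 him).2 (by omega)⟩
      refine no_antihole hwt (by omega) hcons (p 0) fun i hi => ?_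
      by_cases hi0 : i = 0
      · simp only [hi0, if_true]
        have := (hp 0 3 (by omega) le_rfl).1
        exact ⟨this, iff_of_true ⟨this, hnadj 0 3 (by omega) le_rfl (by omega)⟩ (by simp)⟩
      · simp only [hi0, if_false]
        by_cases hi1 : i = 1
        · subst hi1
          simp only [Nat.sub_self, hq0]
          obtain ⟨e1, e2⟩ := hp 0 1 (by omega) (by omega)
          exact ⟨e1, iff_of_false (fun h => h.2 (e2.mpr rfl)) (by simp; omega)⟩
        · by_cases him : i = m + 1
          · subst him
            simp only [Nat.add_sub_cancel, hqm]
            have := (hp 0 2 (by omega) (by omega)).1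
            exact ⟨this, iff_of_true ⟨this, hnadj 0 2 (by omega) (by omega) (by omega)⟩
              (by simp)⟩
          · have := hcompl _ h0 (i - 1) (by omega) (by omega)
            exact ⟨this.1, iff_of_false this.2 (by simp [him])⟩
    · -- the antihole is `p 1 = q 0, …, q m = p 2, p n`
      refine no_antihole hwt hm3 hq (p n) fun i hi => ?_
      rcases Nat.eq_zero_or_pos i with rfl | hi0
      · rw [hq0]
        have := (hp 1 n (by omega) le_rfl).1.symm
        exact ⟨this, iff_of_true
          ⟨this, fun h => hnadj 1 n (by omega) le_rfl (by omega) h.symm⟩ (Or.inl rfl)⟩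
      · rcases hi.eq_or_lt with rfl | him
        · rw [hqm]
          have := (hp 2 n (by omega) le_rfl).1.symm
          exact ⟨this, iff_of_true
            ⟨this, fun h => hnadj 2 n (by omega) le_rfl (by omega) h.symm⟩ (Or.inr rfl)⟩
        · exact ⟨(hcompl _ hend i hi0 him).1,
            iff_of_false (hcompl _ hend i hi0 him).2 (by omega)⟩

/-! ### Existence of a two-pair -/

/-- `{x, y}` is a two-pair of the subgraph of `G` induced on `W`: a pair of distinct non-adjacent
vertices with no induced path of length at least three in `W` between them. -/
def IsTwoPair {V : Type*} (G : SimpleGraph V) (W : Set V) (x y : V) : Prop :=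
  x ∈ W ∧ y ∈ W ∧ Gᶜ.Adj x y ∧
    ∀ p n, IsIndPath G p n → p 0 = x → p n = y → (∀ i ≤ n, p i ∈ W) → n < 3

/-- The theorem of Hayward, Hoàng and Maffray, for the subgraph induced on `W`: if it is not a
clique, it has a two-pair. -/
lemma exists_isTwoPair {V : Type*} [Finite V] {G : SimpleGraph V} (hwt : G.IsWeaklyTriangulated)
    (W : Set V) : (∃ u ∈ W, ∃ v ∈ W, Gᶜ.Adj u v) → ∃ x y, IsTwoPair G W x y := by
  classical
  induction W using WellFoundedLT.induction with
  | ind W ih =>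
  rintro ⟨u, hu, v, hv, huv⟩
  let C : Set V → Set V := fun T => {w ∈ W | CompleteTo G T w}
  let F : Set (Set V) :=
    {T | T ⊆ W ∧ T.Nonempty ∧ Anticonn G T ∧ ∃ a ∈ C T, ∃ b ∈ C T, Gᶜ.Adj a b}
  by_cases hF : F.Nonempty
  · obtain ⟨T₀, hT₀⟩ := hF
    obtain ⟨T, -, hTF, hmax⟩ := (Set.toFinite F).exists_le_maximal hT₀
    obtain ⟨hTW, ⟨t, ht⟩, hTa, hTC⟩ := hTF
    have hlt : C T < W := by
      refine lt_of_le_of_ne (fun w hw => hw.1) fun h => ?_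
      have : t ∈ C T := h ▸ hTW ht
      exact (this.2 t ht).ne rfl
    obtain ⟨x, y, hx, hy, hxy, hpath⟩ := ih _ hlt hTC
    refine ⟨x, y, hx.1, hy.1, hxy, fun p n hp hp0 hpn hpW => ?_⟩
    by_contra! hn
    -- `p i` is the first vertex of the path not complete to `T`
    have hex : ∃ i, i ≤ n ∧ ¬ CompleteTo G T (p i) := by
      by_contra! h
      exact absurd (hpath p n hp hp0 hpn fun i hi => ⟨hpW i hi, h i hi⟩) (by omega)
    set i := Nat.find hex with hi
    obtain ⟨hin, hic⟩ := Nat.find_spec hex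
    rw [← hi] at hin hic
    have hi0 : i ≠ 0 := fun h => hic (by rw [h, hp0]; exact hx.2)
    have hin' : i ≠ n := fun h => hic (by rw [h, hpn]; exact hy.2)
    have hprev : CompleteTo G T (p (i - 1)) := by
      by_contra h
      exact Nat.find_min hex (m := i - 1) (by omega) ⟨by omega, h⟩
    by_cases hnext : CompleteTo G T (p (i + 1))
    · have hmem : insert (p i) T ∈ F := by
        have hic' := hic
        simp only [CompleteTo, not_forall] at hic'
        obtain ⟨s, hs, his⟩ := hic'
        obtain ⟨e1, e2⟩ := hp (i - 1) i (by omega) hin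
        obtain ⟨e3, e4⟩ := hp i (i + 1) (by omega) (by omega)
        obtain ⟨e5, e6⟩ := hp (i - 1) (i + 1) (by omega) (by omega)
        have hne : p i ≠ s := by
          rintro rfl
          have h1 := (hp 0 i (by omega) hin).2.mp (hp0 ▸ hx.2 _ hs)
          have h2 := (hp i n (by omega) le_rfl).2.mp (hpn ▸ (hy.2 _ hs).symm)
          omega
        refine ⟨Set.insert_subset (hpW i hin) hTW, Set.insert_nonempty _ _,
          hTa.insert_vertex hs ⟨hne, his⟩, p (i - 1), ⟨hpW _ (by omega), ?_⟩, p (i + 1),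
          ⟨hpW _ (by omega), ?_⟩, e5, fun h => ?_⟩
        · rintro z (rfl | hz)
          · exact e2.mpr (by omega)
          · exact hprev z hz
        · rintro z (rfl | hz)
          · exact (e4.mpr rfl).symm
          · exact hnext z hz
        · have := e6.mp h
          omega
      -- maximality forces `p i ∈ T`, so `p i` is adjacent to both ends of a path with `3 ≤ n`
      have hiT : p i ∈ T := hmax hmem (Set.subset_insert _ _) (Set.mem_insert _ _)
      have h1 := (hp 0 i (by omega) hin).2.mp (hp0 ▸ hx.2 _ hiT)
      have h2 := (hp i n (by omega) le_rfl).2.mp (hpn ▸ (hy.2 _ hiT).symm)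
      omega
    · have hi2 : i + 1 ≠ n := fun h => hnext (by rw [h, hpn]; exact hy.2)
      have := complete_of_isIndPath hwt hTa (n := n - i + 1) (by omega)
        (hp.shift (i - 1) (n - i + 1) (by omega)) (by simpa using hprev)
        (by
          have : i - 1 + (n - i + 1) = n := by omega
          simp only [this, hpn]
          exact hy.2)
      have e1 : i - 1 + 1 = i := by omega
      have e2 : i - 1 + 2 = i + 1 := by omega
      simp only [e1, e2] at this
      exact this.elim hic hnext
  · -- the second vertex of a long induced path would form a member of `F`
    refine ⟨u, v, hu, hv, huv, fun p n hp _ _ hpW => ?_⟩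
    by_contra! hn
    refine hF ⟨{p 1}, by simpa using hpW 1 (by omega), by simp, Anticonn.singleton G _,
      p 0, ⟨hpW 0 (by omega), ?_⟩, p 2, ⟨hpW 2 (by omega), ?_⟩, ?_⟩
    · rintro z rfl
      exact (hp 0 1 (by omega) (by omega)).2.mpr rfl
    · rintro z rfl
      exact ((hp 1 2 (by omega) (by omega)).2.mpr rfl).symm
    · obtain ⟨e1, e2⟩ := hp 0 2 (by omega) (by omega)
      exact ⟨e1, fun h => absurd (e2.mp h) (by omega)⟩

/-! ### Star cutsets -/

/-- The subgraph of `G` induced on `W` has a star cutset `S` with centre `c`, the remaining vertices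
being split into nonempty parts `A` and `B` with no edge between them. -/
def HasStarCutset {V : Type*} (G : SimpleGraph V) (W : Set V) : Prop :=
  ∃ (c : V) (S A B : Set V), c ∈ S ∧ S ⊆ {c} ∪ G.neighborSet c ∧ A.Nonempty ∧ B.Nonempty ∧
    W = S ∪ A ∪ B ∧ Disjoint S A ∧ Disjoint S B ∧ ∀ a ∈ A, ∀ b ∈ B, a ≠ b ∧ ¬ G.Adj a b

/-- A two-pair `{x, y}` yields a star cutset unless both its vertices are adjacent to all others. -/
lemma IsTwoPair.hasStarCutset_or {V : Type*} {G : SimpleGraph V} {W : Set V} {x y : V}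
    (h : IsTwoPair G W x y) :
    HasStarCutset G W ∨ ∀ w ∈ W, w ≠ x → w ≠ y → G.Adj w x ∧ G.Adj w y := by
  classical
  obtain ⟨hx, hy, hxy, hpath⟩ := h
  let S : Set V := {w ∈ W | G.Adj w x ∧ G.Adj w y}
  let U : Set V := W \ S
  have hxS : x ∉ S := fun h => h.2.1.ne rfl
  have hyS : y ∉ S := fun h => h.2.2.ne rfl
  let A : Set V := {w ∈ U | (within G U).Reachable x w}
  let B : Set V := U \ A
  have hxA : x ∈ A := ⟨⟨hx, hxS⟩, Reachable.refl _⟩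
  have hyA : y ∉ A := by
    rintro ⟨-, hr⟩
    obtain ⟨p, n, hp, hn, hp0, hpn, hpU⟩ := exists_isIndPath hxy.1 hr
    have hn3 := hpath p n hp hp0 hpn fun i hi => (hpU i hi).1
    obtain rfl | rfl : n = 1 ∨ n = 2 := by omega
    · have := (hp 0 1 (by omega) le_rfl).2.mpr rfl
      rw [hp0, hpn] at this
      exact hxy.2 this
    · have h1 := (hp 0 1 (by omega) (by omega)).2.mpr rfl
      have h2 := (hp 1 2 (by omega) (by omega)).2.mpr rfl
      rw [hp0] at h1
      rw [hpn] at h2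
      exact (hpU 1 (by omega)).2 ⟨(hpU 1 (by omega)).1, h1.symm, h2⟩
  have hyB : y ∈ B := ⟨⟨hy, hyS⟩, hyA⟩
  have hAB : ∀ a ∈ A, ∀ b ∈ B, a ≠ b ∧ ¬ G.Adj a b := by
    intro a ha b hb
    refine ⟨fun h => hb.2 (h ▸ ha), fun h => hb.2 ⟨hb.1, ha.2.trans ?_⟩⟩
    exact Adj.reachable ⟨h, ha.1, hb.1⟩
  have hW : ∀ w, w ∈ W ↔ w ∈ S ∨ w ∈ A ∨ w ∈ B := by
    intro w
    have hSW : w ∈ S → w ∈ W := fun h => h.1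
    have hAW : w ∈ A → w ∈ W := fun h => h.1.1
    have hBW : w ∈ B → w ∈ W := fun h => h.1.1
    have : w ∈ B ↔ (w ∈ W ∧ w ∉ S) ∧ w ∉ A := Iff.rfl
    tauto
  have hSA : ∀ w ∈ S, w ∉ A := fun w hw h => h.1.2 hw
  have hSB : ∀ w ∈ S, w ∉ B := fun w hw h => h.1.2 hw
  by_cases h1 : ∃ z ∈ A, z ≠ x
  · left
    obtain ⟨z, hz, hzx⟩ := h1
    refine ⟨x, insert x S, A \ {x}, B, Set.mem_insert _ _, ?_, ⟨z, hz, hzx⟩, ⟨y, hyB⟩, ?_, ?_, ?_,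
      fun a ha => hAB a ha.1⟩
    · rintro w (rfl | hw)
      · exact Or.inl rfl
      · exact Or.inr hw.2.1.symm
    · ext w
      by_cases hwx : w = x
      · subst hwx; simp [hx]
      · simp [hW w, hwx, or_assoc]
    · rw [Set.disjoint_left]
      rintro w (rfl | hw) hw'
      · exact hw'.2 rfl
      · exact hSA w hw hw'.1
    · rw [Set.disjoint_left]
      rintro w (rfl | hw) hw'
      · exact hw'.2 hxA
      · exact hSB w hw hw'
  by_cases h2 : ∃ z ∈ B, z ≠ y
  · left
    obtain ⟨z, hz, hzy⟩ := h2
    refine ⟨y, insert y S, A, B \ {y}, Set.mem_insert _ _, ?_, ⟨x, hxA⟩, ⟨z, hz, hzy⟩, ?_, ?_, ?_,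
      fun a ha b hb => hAB a ha b hb.1⟩
    · rintro w (rfl | hw)
      · exact Or.inl rfl
      · exact Or.inr hw.2.2.symm
    · ext w
      by_cases hwy : w = y
      · subst hwy; simp [hy]
      · simp [hW w, hwy, or_assoc]
    · rw [Set.disjoint_left]
      rintro w (rfl | hw) hw'
      · exact hyA hw'
      · exact hSA w hw hw'
    · rw [Set.disjoint_left]
      rintro w (rfl | hw) hw'
      · exact hw'.2 rfl
      · exact hSB w hw hw'.1
  right
  push Not at h1 h2
  intro w hw hwx hwy
  rcases (hW w).mp hw with h | h | h
  · exact h.2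
  · exact absurd (h1 w h) hwx
  · exact absurd (h2 w h) hwy

/-- The structure theorem for the subgraph induced on `W`. -/
lemma structure_on {V : Type*} [Finite V] {G : SimpleGraph V} (hwt : G.IsWeaklyTriangulated)
    (W : Set V) :
    (∀ u ∈ W, ∀ v ∈ W, u ≠ v → G.Adj u v) ∨
      (∀ v ∈ W, ∃! w, w ∈ W ∧ Gᶜ.Adj v w) ∨ HasStarCutset G W := by
  classical
  induction W using WellFoundedLT.induction with
  | ind W ih =>
  by_cases hcl : ∀ u ∈ W, ∀ v ∈ W, u ≠ v → G.Adj u v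
  · exact Or.inl hcl
  right
  push Not at hcl
  obtain ⟨u, hu, v, hv, huv, hn⟩ := hcl
  obtain ⟨x, y, hxy⟩ := exists_isTwoPair hwt W ⟨u, hu, v, hv, huv, hn⟩
  rcases hxy.hasStarCutset_or with h | hall
  · exact Or.inr h
  obtain ⟨hx, hy, hxy, -⟩ := hxy
  let H : Set V := {w ∈ W | w ≠ x ∧ w ≠ y}
  have hWH : ∀ w, w ∈ W ↔ w = x ∨ w = y ∨ w ∈ H := by
    intro w
    have : w ∈ H ↔ w ∈ W ∧ w ≠ x ∧ w ≠ y := Iff.rfl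
    have hx' : w = x → w ∈ W := fun h => h ▸ hx
    have hy' : w = y → w ∈ W := fun h => h ▸ hy
    tauto
  have hHx : ∀ w ∈ H, G.Adj w x := fun w hw => (hall w hw.1 hw.2.1 hw.2.2).1
  have hHy : ∀ w ∈ H, G.Adj w y := fun w hw => (hall w hw.1 hw.2.1 hw.2.2).2
  have hlt : H < W := by
    refine lt_of_le_of_ne (fun w hw => hw.1) fun h => ?_
    have : x ∈ H := h ▸ hx
    exact this.2.1 rfl
  -- the pair `{x, y}` extends a complement of a perfect matching on `H` to one on `W`
  have hpm : (∀ v ∈ H, ∃! w, w ∈ H ∧ Gᶜ.Adj v w) → ∀ v ∈ W, ∃! w, w ∈ W ∧ Gᶜ.Adj v w := by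
    intro hH v hv
    rcases (hWH v).mp hv with rfl | rfl | hvH
    · refine ⟨y, ⟨hy, hxy⟩, fun w hw => ?_⟩
      rcases (hWH w).mp hw.1 with rfl | rfl | hwH
      · exact absurd rfl hw.2.1
      · rfl
      · exact absurd (hHx w hwH).symm hw.2.2
    · refine ⟨x, ⟨hx, hxy.symm⟩, fun w hw => ?_⟩
      rcases (hWH w).mp hw.1 with rfl | rfl | hwH
      · rfl
      · exact absurd rfl hw.2.1
      · exact absurd (hHy w hwH).symm hw.2.2
    · obtain ⟨w, ⟨hwH, hvw⟩, huniq⟩ := hH v hvH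
      refine ⟨w, ⟨hwH.1, hvw⟩, fun z hz => ?_⟩
      rcases (hWH z).mp hz.1 with rfl | rfl | hzH
      · exact absurd (hHx v hvH) hz.2.2
      · exact absurd (hHy v hvH) hz.2.2
      · exact huniq z ⟨hzH, hz.2⟩
  rcases ih H hlt with hcl | hmat | ⟨c, S, A, B, hc, hS, hA, hB, hHe, hSA, hSB, hAB⟩
  · rcases H.eq_empty_or_nonempty with hemp | ⟨c, hc⟩
    · exact Or.inl (hpm fun v hv => absurd hv (by simp [hemp]))
    · refine Or.inr ⟨c, H, {x}, {y}, hc, fun w hw => ?_, by simp, by simp, ?_, ?_, ?_, ?_⟩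
      · by_cases hwc : w = c
        · exact Or.inl hwc
        · exact Or.inr (hcl c hc w hw (Ne.symm hwc))
      · ext w
        simp only [hWH w, Set.mem_union, Set.mem_singleton_iff]
        tauto
      · exact Set.disjoint_singleton_right.mpr fun h => h.2.1 rfl
      · exact Set.disjoint_singleton_right.mpr fun h => h.2.2 rfl
      · rintro a rfl b rfl
        exact hxy
  · exact Or.inl (hpm hmat)
  · have hSH : ∀ w ∈ S, w ∈ H := fun w hw => by rw [hHe]; exact Or.inl (Or.inl hw)
    have hAH : ∀ w ∈ A, w ∈ H := fun w hw => by rw [hHe]; exact Or.inl (Or.inr hw)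
    have hBH : ∀ w ∈ B, w ∈ H := fun w hw => by rw [hHe]; exact Or.inr hw
    have hHe' : ∀ w, w ∈ H ↔ (w ∈ S ∨ w ∈ A) ∨ w ∈ B := fun w => by rw [hHe]; rfl
    refine Or.inr ⟨c, insert x (insert y S), A, B, Or.inr (Or.inr hc), ?_, hA, hB, ?_, ?_, ?_, hAB⟩
    · rintro w (rfl | rfl | hw)
      · exact Or.inr (hHx c (hSH c hc))
      · exact Or.inr (hHy c (hSH c hc))
      · exact hS hw
    · ext w
      simp only [hWH w, hHe' w, Set.mem_union, Set.mem_insert_iff]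
      tauto
    · rw [Set.disjoint_left] at hSA ⊢
      rintro w (rfl | rfl | hw) hwA
      · exact (hAH _ hwA).2.1 rfl
      · exact (hAH _ hwA).2.2 rfl
      · exact hSA hw hwA
    · rw [Set.disjoint_left] at hSB ⊢
      rintro w (rfl | rfl | hw) hwB
      · exact (hBH _ hwB).2.1 rfl
      · exact (hBH _ hwB).2.2 rfl
      · exact hSB hw hwB

/-- Every weakly triangulated graph is a clique, or the complement of a perfect matching,
or has a star cutset. -/
theorem weaklyTriangulated_structure {V : Type*} [Fintype V] (G : SimpleGraph V)
    (hwt : G.IsWeaklyTriangulated) :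
    (∀ u v : V, u ≠ v → G.Adj u v) ∨
      (∀ v : V, ∃! w : V, (Gᶜ).Adj v w) ∨
      (∃ s : Set V, (∃ c ∈ s, s ⊆ {c} ∪ G.neighborSet c) ∧
        ¬ (G.induce sᶜ).Preconnected) := by
  rcases structure_on hwt Set.univ with h | h |
      ⟨c, S, A, B, hc, hS, ⟨a, ha⟩, ⟨b, hb⟩, hW, hSA, hSB, hAB⟩
  · exact Or.inl fun u v => h u trivial v trivial
  · exact Or.inr (Or.inl fun v => by simpa using h v trivial)
  · refine Or.inr (Or.inr ⟨S, ⟨c, hc, hS⟩, fun hpre => ?_⟩)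
    have haS : a ∈ Sᶜ := fun h => Set.disjoint_left.mp hSA h ha
    have hbS : b ∈ Sᶜ := fun h => Set.disjoint_left.mp hSB h hb
    obtain ⟨w⟩ := hpre ⟨a, haS⟩ ⟨b, hbS⟩
    -- a walk in `G - S` that starts in `A` never leaves `A`
    have key : ∀ (u v : (Sᶜ : Set V)), (G.induce Sᶜ).Walk u v → u.1 ∈ A → v.1 ∈ A := by
      intro u v w
      induction w with
      | nil => exact id
      | @cons u v _ huv _ ih =>
        intro hu
        refine ih ?_
        have hv : v.1 ∈ S ∪ A ∪ B := hW ▸ Set.mem_univ _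
        rcases hv with (hv | hv) | hv
        · exact absurd hv v.2
        · exact hv
        · exact absurd huv (hAB _ hu _ hv).2
    exact (hAB b (key _ _ w ha) b hb).1 rfl
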